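/- arXiv:0706.0089 — 2 statements merged into one kernel-verified Lean document; each statement's English description precedes it below -/
import Mathlib

section
/- For every n ≥ 2, the spin extension S̃_n is a finite group of order 2·n!. -/
open Equiv

/-- Generator `z` as an element of the free group. -/
def zF (n : ℕ) : FreeGroup (Fin (n-1) ⊕ Unit) := FreeGroup.of (Sum.inr ())

/-- Generator `τ̃ᵢ` as an element of the free group. -/
def tF (n : ℕ) (i : Fin (n-1)) : FreeGroup (Fin (n-1) ⊕ Unit) := FreeGroup.of (Sum.inl i)

/-- Relations of the spin extension of the symmetric group. -/
def spinRels (n : ℕ) : Set (FreeGroup (Fin (n-1) ⊕ Unit)) :=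
  {zF n * zF n} ∪
  {w | ∃ i : Fin (n-1), w = zF n * tF n i * (tF n i * zF n)⁻¹} ∪
  {w | ∃ i : Fin (n-1), w = tF n i * tF n i * (zF n)⁻¹} ∪
  {w | ∃ i j : Fin (n-1), 1 < |(i : ℤ) - (j : ℤ)| ∧ w = tF n i * tF n j * (zF n * tF n j * tF n i)⁻¹} ∪
  {w | ∃ i j : Fin (n-1), (j : ℕ) = (i : ℕ) + 1 ∧
        w = tF n i * tF n j * tF n i * (tF n j * tF n i * tF n j)⁻¹}

/-- The spin extension `S̃ₙ` of the symmetric group, as a presented group. -/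
abbrev SpinSym (n : ℕ) := PresentedGroup (spinRels n)

/-- The central element `z` of `S̃ₙ`. -/
def zt (n : ℕ) : SpinSym n := PresentedGroup.of (Sum.inr ())

/-- The generator `τ̃ᵢ` of `S̃ₙ`. -/
def tt (n : ℕ) (i : Fin (n-1)) : SpinSym n := PresentedGroup.of (Sum.inl i)

/-- `i` as an element of `Fin n`. -/
def finL (n : ℕ) (i : Fin (n-1)) : Fin n := ⟨i, by have := i.2; omega⟩

/-- `i+1` as an element of `Fin n`. -/
def finR (n : ℕ) (i : Fin (n-1)) : Fin n := ⟨(i : ℕ) + 1, by have := i.2; omega⟩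

/-- `τ̃ₖ` for a natural number index, `1` out of range. -/
def ttN (n : ℕ) (k : ℕ) : SpinSym n := if h : k < n - 1 then tt n ⟨k, h⟩ else 1

/-- For `i ≤ j`, the word `τ̃ᵢ·τ̃ᵢ₊₁⋯τ̃ⱼ₋₂·τ̃ⱼ₋₁·τ̃ⱼ₋₂⋯τ̃ᵢ₊₁·τ̃ᵢ` (equal to `1` when `i = j`). -/
def ttilCore (n i j : ℕ) : SpinSym n :=
  (((List.range' i (j - i)) ++ (List.range' i (j - 1 - i)).reverse).map (ttN n)).prod

/-- The lifted transpositions `τ̃_{i,j}`, with `τ̃_{j,i} = z·τ̃_{i,j}` for `i < j`,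
and `τ̃_{k,k} = 1`. -/
def ttil (n i j : ℕ) : SpinSym n := if j < i then zt n * ttilCore n j i else ttilCore n i j


section CoxeterTypeA

variable {G : Type*} [Group G]

/-- The braid relations of type `A` with involutive generators `t 0, …, t (m - 1)`. -/
structure IsTypeASystem (t : ℕ → G) (m : ℕ) : Prop where
  mul_self : ∀ i < m, t i * t i = 1
  comm : ∀ i j, i + 1 < j → j < m → t i * t j = t j * t i
  braid : ∀ i, i + 1 < m → t i * t (i + 1) * t i = t (i + 1) * t i * t (i + 1)

/-- The word `t m * t (m - 1) * ⋯` with `l` letters. -/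
def descWord (t : ℕ → G) (m : ℕ) : ℕ → G
  | 0 => 1
  | l + 1 => descWord t m l * t (m - l)

namespace IsTypeASystem

variable {t : ℕ → G} {m : ℕ}

lemma mono (h : IsTypeASystem t (m + 1)) : IsTypeASystem t m where
  mul_self i hi := h.mul_self i (by omega)
  comm i j hij hj := h.comm i j hij (by omega)
  braid i hi := h.braid i (by omega)

lemma descWord_comm (h : IsTypeASystem t (m + 1)) {l j : ℕ} (hjl : j + l < m) :
    descWord t m l * t j = t j * descWord t m l := by
  induction l with
  | zero => simp [descWord]
  | succ l ih =>
    rw [descWord, mul_assoc, ← h.comm j (m - l) (by omega) (by omega), ← mul_assoc,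
      ih (by omega), mul_assoc]

lemma descWord_mul_of_lt (h : IsTypeASystem t (m + 1)) {l j : ℕ} (hjl : m < j + l) (hj : j < m)
    (hl : l ≤ m + 1) : descWord t m l * t (j + 1) = t j * descWord t m l := by
  induction l with
  | zero => omega
  | succ l ih =>
    rcases Nat.lt_or_ge m (j + l) with hlt | hge
    · rw [descWord, mul_assoc, h.comm (m - l) (j + 1) (by omega) (by omega), ← mul_assoc,
        ih hlt (by omega), mul_assoc]
    · obtain ⟨k, rfl⟩ : ∃ k, l = k + 1 := ⟨l - 1, by omega⟩
      have h₁ : m - (k + 1) = j := by omega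
      have h₂ : m - k = j + 1 := by omega
      rw [descWord, descWord, h₁, h₂]
      calc descWord t m k * t (j + 1) * t j * t (j + 1)
          = descWord t m k * (t (j + 1) * t j * t (j + 1)) := by group
        _ = descWord t m k * t j * t (j + 1) * t j := by rw [← h.braid j (by omega)]; group
        _ = t j * (descWord t m k * t (j + 1) * t j) := by
            rw [h.descWord_comm (by omega)]; group

/-- The subgroup generated by `t 0, …, t m` is covered by the cosets of the words `descWord`. -/
lemma exists_mul_descWord (h : IsTypeASystem t (m + 1)) {g : G}
    (hg : g ∈ Subgroup.closure (t '' Set.Iio (m + 1))) :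
    ∃ x : Subgroup.closure (t '' Set.Iio m) × Fin (m + 2), x.1 * descWord t m x.2 = g := by
  have mem : ∀ j < m, t j ∈ Subgroup.closure (t '' Set.Iio m) := fun j hj =>
    Subgroup.subset_closure ⟨j, hj, rfl⟩
  have step : ∀ a, ∀ j < m + 1,
      (∃ x : Subgroup.closure (t '' Set.Iio m) × Fin (m + 2), x.1 * descWord t m x.2 = a) →
      ∃ x : Subgroup.closure (t '' Set.Iio m) × Fin (m + 2),
        x.1 * descWord t m x.2 = a * t j := by
    rintro _ j hj ⟨⟨⟨u, hu⟩, ⟨l, hl⟩⟩, rfl⟩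
    rcases lt_trichotomy (j + l) m with hlt | heq | hgt
    · refine ⟨⟨⟨u * t j, mul_mem hu (mem j (by omega))⟩, ⟨l, hl⟩⟩, ?_⟩
      simp only [mul_assoc, h.descWord_comm (l := l) (j := j) hlt]
    · refine ⟨⟨⟨u, hu⟩, ⟨l + 1, by omega⟩⟩, ?_⟩
      simp only [descWord, show m - l = j by omega, mul_assoc]
    · obtain heq | hgt := (Nat.succ_le_of_lt hgt).eq_or_lt
      · obtain ⟨k, rfl⟩ : ∃ k, l = k + 1 := ⟨l - 1, by omega⟩
        refine ⟨⟨⟨u, hu⟩, ⟨k, by omega⟩⟩, ?_⟩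
        simp only [descWord, show m - k = j by omega, mul_assoc, h.mul_self j hj, mul_one]
      · obtain ⟨k, rfl⟩ : ∃ k, j = k + 1 := ⟨j - 1, by omega⟩
        refine ⟨⟨⟨u * t k, mul_mem hu (mem k (by omega))⟩, ⟨l, hl⟩⟩, ?_⟩
        simp only [mul_assoc,
          h.descWord_mul_of_lt (l := l) (j := k) (by omega) (by omega) (by omega)]
  induction hg using Subgroup.closure_induction_right with
  | one => exact ⟨⟨1, 0⟩, by simp [descWord]⟩
  | mul_right a _ y hy ih =>
    obtain ⟨j, hj, rfl⟩ := hy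
    exact step a j hj ih
  | mul_inv_cancel a _ y hy ih =>
    obtain ⟨j, hj, rfl⟩ := hy
    rw [inv_eq_of_mul_eq_one_left (h.mul_self j hj)]
    exact step a j hj ih

lemma card_closure_le (h : IsTypeASystem t m) :
    Finite (Subgroup.closure (t '' Set.Iio m)) ∧
      Nat.card (Subgroup.closure (t '' Set.Iio m)) ≤ (m + 1).factorial := by
  induction m with
  | zero =>
    have : Subgroup.closure (t '' Set.Iio 0) = ⊥ := by simp
    rw [this]
    exact ⟨inferInstance, by simp⟩
  | succ m ih =>
    obtain ⟨hfin, hcard⟩ := ih h.mono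
    choose f hf using fun g : Subgroup.closure (t '' Set.Iio (m + 1)) =>
      h.exists_mul_descWord g.2
    have hinj : Function.Injective f := fun a b hab => by
      ext
      rw [← hf a, ← hf b, hab]
    refine ⟨Finite.of_injective f hinj, (Nat.card_le_card_of_injective f hinj).trans ?_⟩
    rw [Nat.card_prod, Nat.card_fin, Nat.factorial_succ (m + 1), mul_comm]
    exact Nat.mul_le_mul_left _ hcard

end IsTypeASystem

end CoxeterTypeA

section SpinRelations

variable {n : ℕ}

lemma zt_mul_zt : zt n * zt n = 1 :=
  PresentedGroup.one_of_mem (rels := spinRels n) (x := zF n * zF n) (by simp [spinRels])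

lemma zt_mul_tt (i : Fin (n - 1)) : zt n * tt n i = tt n i * zt n :=
  PresentedGroup.mk_eq_mk_of_mul_inv_mem (rels := spinRels n)
    (x := zF n * tF n i) (y := tF n i * zF n)
    (Or.inl <| Or.inl <| Or.inl <| Or.inr ⟨i, rfl⟩)

lemma tt_mul_tt (i : Fin (n - 1)) : tt n i * tt n i = zt n :=
  PresentedGroup.mk_eq_mk_of_mul_inv_mem (rels := spinRels n)
    (x := tF n i * tF n i) (y := zF n) (Or.inl <| Or.inl <| Or.inr ⟨i, rfl⟩)

lemma tt_anticomm {i j : Fin (n - 1)} (h : 1 < |(i : ℤ) - (j : ℤ)|) :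
    tt n i * tt n j = zt n * tt n j * tt n i :=
  PresentedGroup.mk_eq_mk_of_mul_inv_mem (rels := spinRels n)
    (x := tF n i * tF n j) (y := zF n * tF n j * tF n i) (Or.inl <| Or.inr ⟨i, j, h, rfl⟩)

lemma tt_braid {i j : Fin (n - 1)} (h : (j : ℕ) = (i : ℕ) + 1) :
    tt n i * tt n j * tt n i = tt n j * tt n i * tt n j :=
  PresentedGroup.mk_eq_mk_of_mul_inv_mem (rels := spinRels n)
    (x := tF n i * tF n j * tF n i) (y := tF n j * tF n i * tF n j) (Or.inr ⟨i, j, h, rfl⟩)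

variable {H : Type*} [Group H]

/-- The homomorphism out of `S̃ₙ` defined by images of the generators satisfying the relations. -/
def SpinSym.lift (t : Fin (n - 1) → H) (z : H) (hz : z * z = 1)
    (hzt : ∀ i, z * t i = t i * z) (htt : ∀ i, t i * t i = z)
    (hcomm : ∀ i j : Fin (n - 1), 1 < |(i : ℤ) - (j : ℤ)| → t i * t j = z * t j * t i)
    (hbraid : ∀ i j : Fin (n - 1), (j : ℕ) = i + 1 → t i * t j * t i = t j * t i * t j) :
    SpinSym n →* H :=
  PresentedGroup.toGroup (f := Sum.elim t fun _ => z) <| by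
    rintro _ ((((rfl | ⟨i, rfl⟩) | ⟨i, rfl⟩) | ⟨i, j, h, rfl⟩) | ⟨i, j, h, rfl⟩)
    · simpa [zF] using hz
    · simpa [zF, tF, -mul_inv_rev, mul_inv_eq_one] using hzt i
    · simpa [zF, tF, -mul_inv_rev, mul_inv_eq_one] using htt i
    · simpa [zF, tF, -mul_inv_rev, mul_inv_eq_one] using hcomm i j h
    · simpa [zF, tF, -mul_inv_rev, mul_inv_eq_one] using hbraid i j h

lemma SpinSym.lift_tt (t : Fin (n - 1) → H) (z : H) (hz : z * z = 1)
    (hzt : ∀ i, z * t i = t i * z) (htt : ∀ i, t i * t i = z)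
    (hcomm : ∀ i j : Fin (n - 1), 1 < |(i : ℤ) - (j : ℤ)| → t i * t j = z * t j * t i)
    (hbraid : ∀ i j : Fin (n - 1), (j : ℕ) = i + 1 → t i * t j * t i = t j * t i * t j)
    (i : Fin (n - 1)) : SpinSym.lift t z hz hzt htt hcomm hbraid (tt n i) = t i :=
  PresentedGroup.toGroup.of _

lemma SpinSym.lift_zt (t : Fin (n - 1) → H) (z : H) (hz : z * z = 1)
    (hzt : ∀ i, z * t i = t i * z) (htt : ∀ i, t i * t i = z)
    (hcomm : ∀ i j : Fin (n - 1), 1 < |(i : ℤ) - (j : ℤ)| → t i * t j = z * t j * t i)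
    (hbraid : ∀ i j : Fin (n - 1), (j : ℕ) = i + 1 → t i * t j * t i = t j * t i * t j) :
    SpinSym.lift t z hz hzt htt hcomm hbraid (zt n) = z :=
  PresentedGroup.toGroup.of _

lemma zt_mem_center : zt n ∈ Subgroup.center (SpinSym n) := by
  rw [← Subgroup.centralizer_univ, ← Subgroup.coe_top, ← PresentedGroup.closure_range_of,
    Subgroup.centralizer_closure, Subgroup.mem_centralizer_iff]
  rintro _ ⟨i | _, rfl⟩
  · exact (zt_mul_tt i).symm
  · rfl

instance : (Subgroup.zpowers (zt n)).Normal :=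
  ⟨fun _ hx g => by
    rwa [Subgroup.mem_center_iff.mp (Subgroup.zpowers_le.mpr zt_mem_center hx) g,
      mul_inv_cancel_right]⟩

end SpinRelations

section Clifford

/-- The quadratic form `x ↦ -(x ⬝ᵥ x) / 2`. -/
def spinForm (n : ℕ) : QuadraticForm ℚ (Fin n → ℚ) :=
  LinearMap.BilinMap.toQuadraticMap ((-1 / 2 : ℚ) • dotProductBilin ℚ ℚ)

/-- The root `eᵢ - eᵢ₊₁`. -/
def spinRoot (n : ℕ) (i : Fin (n - 1)) : Fin n → ℚ :=
  Pi.single (finL n i) 1 - Pi.single (finR n i) 1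

lemma spinForm_apply {n : ℕ} (x : Fin n → ℚ) : spinForm n x = (-1 / 2) * (x ⬝ᵥ x) := rfl

lemma polar_spinForm {n : ℕ} (x y : Fin n → ℚ) :
    QuadraticMap.polar (spinForm n) x y = -(x ⬝ᵥ y) := by
  rw [spinForm, LinearMap.BilinMap.polar_toQuadraticMap]
  change (-1 / 2) * (x ⬝ᵥ y) + (-1 / 2) * (y ⬝ᵥ x) = _
  rw [dotProduct_comm y x]
  ring

lemma spinRoot_dotProduct {n : ℕ} (i j : Fin (n - 1)) :
    spinRoot n i ⬝ᵥ spinRoot n j =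
      if i = j then 2 else if (i : ℕ) + 1 = j ∨ (j : ℕ) + 1 = i then -1 else 0 := by
  simp only [spinRoot, sub_dotProduct, dotProduct_sub, single_one_dotProduct, Pi.single_apply,
    finL, finR, Fin.ext_iff]
  split_ifs <;> first | omega | norm_num

open CliffordAlgebra

lemma ι_spinRoot_mul_self {n : ℕ} (i : Fin (n - 1)) :
    ι (spinForm n) (spinRoot n i) * ι (spinForm n) (spinRoot n i) = -1 := by
  rw [ι_sq_scalar, spinForm_apply, spinRoot_dotProduct]
  norm_num

lemma ι_spinRoot_anticomm {n : ℕ} {i j : Fin (n - 1)} (h : 1 < |(i : ℤ) - (j : ℤ)|) :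
    ι (spinForm n) (spinRoot n i) * ι (spinForm n) (spinRoot n j) =
      -(ι (spinForm n) (spinRoot n j) * ι (spinForm n) (spinRoot n i)) := by
  rw [lt_abs] at h
  rw [eq_neg_iff_add_eq_zero, ι_mul_ι_add_swap, polar_spinForm, spinRoot_dotProduct,
    if_neg (by rintro rfl; omega), if_neg (by omega)]
  simp

lemma ι_spinRoot_braid {n : ℕ} {i j : Fin (n - 1)} (h : (j : ℕ) = i + 1) :
    ι (spinForm n) (spinRoot n i) * ι (spinForm n) (spinRoot n j) * ι (spinForm n) (spinRoot n i) =
      ι (spinForm n) (spinRoot n j) * ι (spinForm n) (spinRoot n i) *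
        ι (spinForm n) (spinRoot n j) := by
  have hadd := ι_mul_ι_add_swap (Q := spinForm n) (spinRoot n i) (spinRoot n j)
  rw [polar_spinForm, spinRoot_dotProduct, if_neg (by rintro rfl; omega), if_pos (by omega),
    neg_neg, map_one] at hadd
  have hi := ι_spinRoot_mul_self i
  have hj := ι_spinRoot_mul_self j
  generalize ι (spinForm n) (spinRoot n i) = a at *
  generalize ι (spinForm n) (spinRoot n j) = b at *
  calc a * b * a = a * (a * b + b * a) - a * a * b := by noncomm_ring
    _ = (a * b + b * a) * b - a * (b * b) := by rw [hadd, hi, hj]; noncomm_ring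
    _ = b * a * b := by noncomm_ring

/-- The root `eᵢ - eᵢ₊₁` as a unit of the Clifford algebra. -/
def spinUnit (n : ℕ) (i : Fin (n - 1)) : (CliffordAlgebra (spinForm n))ˣ where
  val := ι (spinForm n) (spinRoot n i)
  inv := -ι (spinForm n) (spinRoot n i)
  val_inv := by rw [mul_neg, ι_spinRoot_mul_self, neg_neg]
  inv_val := by rw [neg_mul, ι_spinRoot_mul_self, neg_neg]

/-- The representation of `S̃ₙ` in the Clifford algebra. -/
def spinToClifford (n : ℕ) : SpinSym n →* (CliffordAlgebra (spinForm n))ˣ :=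
  SpinSym.lift (spinUnit n) (-1) (by simp) (by simp)
    (fun i => Units.ext (by simpa [spinUnit, -ι_sq_scalar] using ι_spinRoot_mul_self i))
    (fun i j h => Units.ext (by simpa [spinUnit] using ι_spinRoot_anticomm h))
    (fun i j h => Units.ext (by simpa [spinUnit] using ι_spinRoot_braid h))

lemma zt_ne_one (n : ℕ) : zt n ≠ 1 := by
  intro h
  have hneg := congrArg (spinToClifford n) h
  rw [map_one, spinToClifford, SpinSym.lift_zt] at hneg
  have : Invertible (2 : ℚ) := invertibleOfNonzero two_ne_zero
  have hval : (-1 : CliffordAlgebra (spinForm n)) = 1 := by simpa using congrArg Units.val hneg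
  have : CharZero (CliffordAlgebra (spinForm n)) := algebraRat.charZero _
  norm_num at hval

end Clifford

/-- The projection of `S̃ₙ` onto the symmetric group. -/
def spinToPerm (n : ℕ) : SpinSym n →* Perm (Fin n) :=
  SpinSym.lift (fun i => swap (finL n i) (finR n i)) 1 (by simp) (by simp) (by simp)
    (fun i j h => by
      rw [lt_abs] at h
      rw [one_mul]
      refine (Perm.disjoint_iff_disjoint_support.mpr ?_).commute
      rw [Perm.support_swap (by simp [finL, finR]), Perm.support_swap (by simp [finL, finR])]
      simp [finL, finR]
      omega)
    (fun i j h => by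
      have hj : finL n j = finR n i := Fin.ext h
      have h₁ : finL n i ≠ finR n i := by simp [finL, finR]
      have h₂ : finR n i ≠ finR n j := by simp [finR]; omega
      have h₃ : finL n i ≠ finR n j := by simp [finL, finR]; omega
      rw [hj, swap_mul_swap_mul_swap h₁ h₃, swap_comm (finR n j) (finL n i),
        ← swap_mul_swap_mul_swap h₂.symm h₃.symm, swap_comm (finR n i) (finL n i),
        swap_comm (finR n j) (finR n i)])

lemma spinToPerm_surjective (n : ℕ) (hn : 2 ≤ n) : Function.Surjective (spinToPerm n) := by
  obtain ⟨m, rfl⟩ : ∃ m, n = m + 1 := ⟨n - 1, by omega⟩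
  rw [← MonoidHom.mrange_eq_top, eq_top_iff, ← Perm.mclosure_swap_castSucc_succ m,
    Submonoid.closure_le]
  rintro _ ⟨i, rfl⟩
  exact ⟨tt (m + 1) i, SpinSym.lift_tt ..⟩

lemma card_quotient_zpowers_zt (n : ℕ) (hn : 2 ≤ n) :
    Nat.card (SpinSym n ⧸ Subgroup.zpowers (zt n)) = n.factorial := by
  let π := QuotientGroup.mk' (Subgroup.zpowers (zt n))
  have hz : π (zt n) = 1 := (QuotientGroup.eq_one_iff _).mpr (Subgroup.mem_zpowers _)
  have htt : ∀ i (hi : i < n - 1), ttN n i = tt n ⟨i, hi⟩ := fun i hi => dif_pos hi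
  have hsys : IsTypeASystem (fun i => π (ttN n i)) (n - 1) := by
    refine ⟨fun i hi => ?_, fun i j hij hj => ?_, fun i hi => ?_⟩
    · rw [← map_mul, htt i hi, tt_mul_tt, hz]
    · rw [← map_mul, htt i (by omega), htt j hj, tt_anticomm (by rw [lt_abs]; right; simp; omega),
        map_mul, map_mul, hz, one_mul]
    · simp only [← map_mul]
      rw [htt i (by omega), htt (i + 1) hi, tt_braid rfl]
  have htop : Subgroup.closure ((fun i => π (ttN n i)) '' Set.Iio (n - 1)) = ⊤ := by
    rw [eq_top_iff, ← MonoidHom.range_eq_top.mpr (QuotientGroup.mk'_surjective _),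
      MonoidHom.range_eq_map, ← PresentedGroup.closure_range_of, MonoidHom.map_closure,
      Subgroup.closure_le]
    rintro _ ⟨_, ⟨i | _, rfl⟩, rfl⟩
    · exact Subgroup.subset_closure ⟨i, i.2, congrArg π (htt i i.2)⟩
    · exact hz ▸ one_mem _
  obtain ⟨hfin, hle⟩ := hsys.card_closure_le
  rw [htop, Subgroup.card_top, Nat.sub_add_cancel (by omega)] at hle
  rw [htop] at hfin
  have : Finite (SpinSym n ⧸ Subgroup.zpowers (zt n)) := Finite.of_equiv _ Subgroup.topEquiv.toEquiv
  refine hle.antisymm ?_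
  have hker : ∀ x ∈ Subgroup.zpowers (zt n), spinToPerm n x = 1 := by
    change Subgroup.zpowers (zt n) ≤ (spinToPerm n).ker
    exact Subgroup.zpowers_le.mpr (SpinSym.lift_zt ..)
  have := Nat.card_le_card_of_surjective (QuotientGroup.lift _ (spinToPerm n) hker)
    (QuotientGroup.lift_surjective_of_surjective _ _ (spinToPerm_surjective n hn) hker)
  rwa [Nat.card_perm, Nat.card_fin] at this

theorem spin_card (n : ℕ) (hn : 2 ≤ n) :
    Nat.card (SpinSym n) = 2 * n.factorial := by
  rw [Subgroup.card_eq_card_quotient_mul_card_subgroup (Subgroup.zpowers (zt n)),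
    card_quotient_zpowers_zt n hn, Nat.card_zpowers,
    orderOf_eq_prime (pow_two (zt n) ▸ zt_mul_zt) (zt_ne_one n), mul_comm]
end

section
/- Let n ≥ 2. For all 0 ≤ i ≠ j ≤ n−1, one has τ̃_{i,j}² = z in S̃_n. -/
open Equiv

theorem zt_mul_self (n : ℕ) : zt n * zt n = 1 :=
  PresentedGroup.one_of_mem (rels := spinRels n) (x := zF n * zF n) (by simp [spinRels])

theorem tt_mul_self (n : ℕ) (i : Fin (n-1)) : tt n i * tt n i = zt n :=
  PresentedGroup.mk_eq_mk_of_mul_inv_mem (rels := spinRels n) (x := tF n i * tF n i) (y := zF n)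
    (Or.inl (Or.inl (Or.inr ⟨i, rfl⟩)))

theorem ttN_mul_self {n k : ℕ} (hk : k < n - 1) : ttN n k * ttN n k = zt n := by
  simp [ttN, hk, tt_mul_self]

theorem ttilCore_succ (n i : ℕ) : ttilCore n i (i + 1) = ttN n i := by
  simp [ttilCore]

theorem ttilCore_eq_conj (n i k : ℕ) :
    ttilCore n i (i + (k + 2)) = ttN n i * ttilCore n (i + 1) (i + 1 + (k + 1)) * ttN n i := by
  have h : i + (k + 2) - 1 - i = k + 1 := by omega
  have h' : i + 1 + (k + 1) - 1 - (i + 1) = k := by omega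
  simp only [ttilCore, h, h', Nat.add_sub_cancel_left]
  rw [List.range'_succ (n := k + 1), List.range'_succ (n := k)]
  simp [mul_assoc, List.range'_succ]

/-- If `a` and `c` are square roots of the same involution, then so is `a * c * a`. -/
theorem conj_mul_self {G : Type*} [Group G] {a c z : G} (hz : z * z = 1)
    (ha : a * a = z) (hc : c * c = z) : a * c * a * (a * c * a) = z := by
  calc a * c * a * (a * c * a) = a * c * (a * a) * c * a := by group
    _ = a * ((c * c) * (c * c)) * a := by rw [ha, ← hc]; group
    _ = z := by rw [hc, hz, mul_one, ha]

theorem ttilCore_mul_self {n : ℕ} (k : ℕ) : ∀ i : ℕ, i + (k + 1) < n →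
    ttilCore n i (i + (k + 1)) * ttilCore n i (i + (k + 1)) = zt n := by
  induction k with
  | zero =>
    intro i hi
    rw [zero_add, ttilCore_succ, ttN_mul_self (by omega)]
  | succ k ih =>
    intro i hi
    rw [ttilCore_eq_conj]
    exact conj_mul_self (zt_mul_self n) (ttN_mul_self (by omega)) (ih (i + 1) (by omega))

theorem ttilCore_mul_self_of_lt {n i j : ℕ} (hij : i < j) (hj : j < n) :
    ttilCore n i j * ttilCore n i j = zt n := by
  obtain ⟨k, rfl⟩ := Nat.exists_eq_add_of_lt hij
  exact ttilCore_mul_self k i hj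

theorem ttil_sq (n : ℕ) (hn : 2 ≤ n) (i j : Fin n) (hij : i ≠ j) :
    ttil n i.val j.val * ttil n i.val j.val = zt n := by
  unfold ttil
  split_ifs with h
  · have hc := ttilCore_mul_self_of_lt h i.isLt
    have hcomm : Commute (zt n) (ttilCore n j i) :=
      hc ▸ (Commute.refl _).mul_left (Commute.refl _)
    rw [hcomm.symm.mul_mul_mul_comm, zt_mul_self, one_mul, hc]
  · exact ttilCore_mul_self_of_lt (by omega) j.isLt
end
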